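/- The 15×15 matrix M_W (given explicitly below), built from the six functions Ω⁴₁, Ω⁴₂, Ω⁵₁, Ω⁵₂, has determinant det(M_W) = 4·∏_{1≤i<j<k≤5} m_{ijk}, where m_{ijk} is the coefficient of dx¹∧dx²∧dx³ in Ωⁱ∧Ωʲ∧Ωᵏ for the 1-forms Ω¹ = dx¹−dx³, Ω² = dx²−dx³, Ω³ = dx³, Ω⁴ = Ω⁴₁dx¹+Ω⁴₂dx²−dx³, Ω⁵ = Ω⁵₁dx¹+Ω⁵₂dx²−dx³. In particular det(M_W) ≠ 0 at a point if and only if every triple of the five 1-forms is linearly independent there. -/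

import Mathlib

/-!
Let `Γ` be the unknown connection. On `X = (u, v, w)` with `w = x u + y v`, which lies in the plane
`x dx¹ + y dx² = dx³`, the form `x dx¹ + y dx² - dx³` applied to `Γ(X, X)` is a quadratic form in
`u, v`. The three rows of `M_W` belonging to that plane give its coefficients of `u²`, `2uv`, `v²`:
columns 1–6 carry `{x, y} ⊗ {w², 2uw, 2vw}` and columns 7–15 carry `{x, y, 1} ⊗ {u², 2uv, v²}`.
The first nine rows are the planes `(x, y) = (1, 0), (0, 1), (0, 0)`.

The last nine columns are affine in `(x, y)`, so subtracting from the rows of a plane the affine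
combination of the three base planes clears them. With `ξ = w - u` and `η = w - v`, this leaves the
forms `xξ(w + u), yη(w + v), 2xuξ, 2yuη, 2xvξ, 2yvη`. Their values at the lines in which the base
planes meet, `(u, v) = (1, 0), (1, 1), (0, 1)`, are divisible by `x`, `x + y - 1`, `y` respectively.
After these factors are removed and the rows of each plane recombined, the two remaining planes
give a block triangular matrix with three `2 × 2` diagonal blocks, whose determinants are the
triples consisting of one base plane and both remaining planes.
-/

open Matrix

section RowStack

variable {k m : ℕ} {n o R : Type*}

/-- The block column with blocks `f 0, …, f (k - 1)`, listed from top to bottom: this is how the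
rows of `M_W` are grouped by the planes of the web. -/
def rowStack (f : Fin k → Matrix (Fin m) n R) : Matrix (Fin (k * m)) n R :=
  of fun i => f i.divNat i.modNat

theorem rowStack_finProdFinEquiv (f : Fin k → Matrix (Fin m) n R) (l : Fin k) (r : Fin m) (j : n) :
    rowStack f (finProdFinEquiv (l, r)) j = f l r j :=
  congrArg (fun p : Fin k × Fin m => f p.1 p.2 j) (finProdFinEquiv.symm_apply_apply (l, r))

theorem rowStack_mul [NonUnitalNonAssocSemiring R] [Fintype n] (f : Fin k → Matrix (Fin m) n R)
    (V : Matrix n o R) :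
    rowStack f * V = rowStack fun i => f i * V := rfl

theorem rowStack_sub [Sub R] (f g : Fin k → Matrix (Fin m) n R) :
    rowStack f - rowStack g = rowStack fun i => f i - g i := rfl

theorem det_rowStack_mul_left [CommRing R] (S : Fin k → Matrix (Fin m) (Fin m) R)
    (f : Fin k → Matrix (Fin m) (Fin (k * m)) R) :
    (rowStack fun i => S i * f i).det = (∏ i, (S i).det) * (rowStack f).det := by
  let e : Fin (k * m) ≃ Fin m × Fin k := finProdFinEquiv.symm.trans (.prodComm _ _)
  have factor : rowStack (fun i => S i * f i) = (blockDiagonal S).submatrix e e * rowStack f := by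
    ext i j
    obtain ⟨⟨l, r⟩, rfl⟩ := finProdFinEquiv.surjective i
    rw [rowStack_finProdFinEquiv, mul_apply, mul_apply, ← e.symm.sum_comp, Fintype.sum_prod_type]
    simp [e, rowStack_finProdFinEquiv, blockDiagonal_apply, -finProdFinEquiv_symm_apply]
  rw [factor, det_mul, det_submatrix_equiv_self, det_blockDiagonal]

end RowStack

theorem det_fromBlocks_of_mul_eq {m n R : Type*} [Fintype m] [DecidableEq m] [Fintype n]
    [DecidableEq n] [CommRing R] (A : Matrix m m R) (B : Matrix m n R) {C : Matrix n m R}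
    {D : Matrix n n R} {X : Matrix n m R} (hX : D * X = C) :
    (fromBlocks A B C D).det = (A - B * X).det * D.det := by
  have factor : fromBlocks A B C D * fromBlocks 1 0 (-X) 1 = fromBlocks (A - B * X) B 0 D := by
    simp [fromBlocks_multiply, hX, sub_eq_add_neg]
  simpa using congrArg det factor

theorem det_submatrix_finRotate_pow_finSumFinEquiv {m n : ℕ} {R : Type*} [CommRing R] (k : ℕ)
    (M : Matrix (Fin (m + n)) (Fin (m + n)) R) :
    (M.submatrix (⇑(finRotate (m + n) ^ k) ∘ finSumFinEquiv) finSumFinEquiv).det =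
      (-1) ^ ((m + n - 1) * k) * M.det := by
  have reindex : M.submatrix (⇑(finRotate (m + n) ^ k) ∘ finSumFinEquiv) finSumFinEquiv =
      (M.submatrix ⇑(finRotate (m + n) ^ k) id).submatrix finSumFinEquiv finSumFinEquiv := rfl
  rw [reindex, det_submatrix_equiv_self, det_permute, map_pow, sign_finRotate, ← pow_mul]
  simp only [Units.val_pow_eq_pow_val, Units.val_neg, Units.val_one, Int.cast_pow, Int.cast_neg,
    Int.cast_one]

section WebBlocks

variable {R : Type*} [CommRing R]

/-- Columns 1–6 of the three rows of `M_W` belonging to the plane `x dx¹ + y dx² = dx³`: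
the coefficients of `u²`, `2uv`, `v²` in `xw², yw², 2xuw, 2yuw, 2xvw, 2yvw`, where
`w = x u + y v`. -/
def transverseBlock (x y : R) : Matrix (Fin 3) (Fin 6) R :=
  !![x ^ 3, x ^ 2 * y, 2 * x ^ 2, 2 * x * y, 0, 0;
    x ^ 2 * y, x * y ^ 2, x * y, y ^ 2, x ^ 2, x * y;
    x * y ^ 2, y ^ 3, 0, 0, 2 * x * y, 2 * y ^ 2]

/-- Columns 7–15 of the three rows of `M_W` belonging to the plane `x dx¹ + y dx² = dx³`:
the coefficients of `u²`, `2uv`, `v²` in the products of `x`, `y`, `1` with these monomials. -/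
def tangentBlock (x y : R) : Matrix (Fin 3) (Fin 9) R :=
  !![x, 0, 0, y, 0, 0, 1, 0, 0;
    0, x, 0, 0, y, 0, 0, 1, 0;
    0, 0, x, 0, 0, y, 0, 0, 1]

theorem transverseBlock_zero : transverseBlock (0 : R) 0 = 0 := by
  ext i j
  fin_cases i <;> fin_cases j <;> simp [transverseBlock]

theorem tangentBlock_finProdFinEquiv (x y : R) (r l s : Fin 3) :
    tangentBlock x y r (finProdFinEquiv (l, s)) = if r = s then ![x, y, 1] l else 0 := by
  fin_cases r <;> fin_cases l <;> fin_cases s <;> rfl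

theorem tangentBlock_mul_rowStack {n : Type*} (x y : R) (f : Fin 3 → Matrix (Fin 3) n R) :
    tangentBlock x y * rowStack f = x • f 0 + y • f 1 + f 2 := by
  ext r j
  calc (tangentBlock x y * rowStack f) r j
      = ∑ p : Fin 3 × Fin 3, (if r = p.2 then ![x, y, 1] p.1 else 0) * f p.1 p.2 j := by
        rw [mul_apply, ← (finProdFinEquiv (m := 3) (n := 3)).sum_comp]
        exact Fintype.sum_congr _ _ fun p => congrArg₂ (· * ·)
          (tangentBlock_finProdFinEquiv x y r p.1 p.2) (rowStack_finProdFinEquiv f p.1 p.2 j)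
    _ = (x • f 0 + y • f 1 + f 2) r j := by
        simp [Fintype.sum_prod_type, Fin.sum_univ_three]

/-- The rows in columns 1–6 of the base planes `dx¹ = dx³`, `dx² = dx³`, `dx³ = 0`. -/
def baseTransverse (R : Type*) [CommRing R] : Matrix (Fin 9) (Fin 6) R :=
  rowStack ![transverseBlock 1 0, transverseBlock 0 1, transverseBlock 0 0]

/-- The rows in columns 7–15 of the base planes `dx¹ = dx³`, `dx² = dx³`, `dx³ = 0`. -/
def baseTangent (R : Type*) [CommRing R] : Matrix (Fin 9) (Fin 9) R :=
  rowStack ![tangentBlock 1 0, tangentBlock 0 1, tangentBlock 0 0]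

theorem baseTransverse_eq :
    baseTransverse R =
      !![1, 0, 2, 0, 0, 0;
        0, 0, 0, 0, 1, 0;
        0, 0, 0, 0, 0, 0;
        0, 0, 0, 0, 0, 0;
        0, 0, 0, 1, 0, 0;
        0, 1, 0, 0, 0, 2;
        0, 0, 0, 0, 0, 0;
        0, 0, 0, 0, 0, 0;
        0, 0, 0, 0, 0, 0] := by
  ext i j
  fin_cases i <;> fin_cases j <;>
    simp [baseTransverse, rowStack, transverseBlock, Fin.divNat, Fin.modNat]

theorem tangentBlock_mul_baseTransverse (x y : R) :
    tangentBlock x y * baseTransverse R = x • transverseBlock 1 0 + y • transverseBlock 0 1 := by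
  rw [baseTransverse, tangentBlock_mul_rowStack]
  simp [transverseBlock_zero]

theorem baseTangent_mul_baseTransverse : baseTangent R * baseTransverse R = baseTransverse R := by
  rw [baseTangent, rowStack_mul]
  conv_rhs => rw [baseTransverse]
  congr 1
  ext1 i
  fin_cases i <;> simp [tangentBlock_mul_baseTransverse, transverseBlock_zero]

theorem det_baseTangent : (baseTangent R).det = 1 := by
  rw [det_of_isUpperTriangular]
  · simp [Fin.prod_univ_succ, baseTangent, rowStack, tangentBlock, Fin.divNat, Fin.modNat]
  · intro i j hij
    fin_cases i <;> fin_cases j <;> first | rfl | (exfalso; revert hij; simp)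

/-- What is left in columns 1–6 of the rows of a plane once the base planes have been used to clear
columns 7–15: with `ξ = w - u` and `η = w - v`, the coefficients of `u²`, `2uv`, `v²` in
`xξ(w + u), yη(w + v), 2xuξ, 2yuη, 2xvξ, 2yvη`. -/
def reducedBlock (x y : R) : Matrix (Fin 3) (Fin 6) R :=
  transverseBlock x y - (x • transverseBlock 1 0 + y • transverseBlock 0 1)

theorem det_fromBlocks_base (x y : Fin 2 → R) :
    (fromBlocks (rowStack fun l => transverseBlock (x l) (y l) : Matrix (Fin 6) (Fin 6) R)
      (rowStack fun l => tangentBlock (x l) (y l)) (baseTransverse R) (baseTangent R)).det =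
      (rowStack fun l => reducedBlock (x l) (y l)).det := by
  rw [det_fromBlocks_of_mul_eq _ _ baseTangent_mul_baseTransverse, det_baseTangent, mul_one,
    rowStack_mul, rowStack_sub]
  simp only [tangentBlock_mul_baseTransverse]
  rfl

/-- Turns the coefficients of `u²`, `2uv`, `v²` in a quadratic form into its values at
`(1, 0)`, `(1, 1)`, `(0, 1)`. -/
def evalMatrix (R : Type*) [CommRing R] : Matrix (Fin 3) (Fin 3) R :=
  !![1, 0, 0; 1, 2, 1; 0, 0, 1]

/-- The row operations separating the factors `x`, `x + y - 1`, `y` from the values of the reduced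
forms at `(1, 0)`, `(1, 1)`, `(0, 1)`. -/
def rowFactor (x y : R) : Matrix (Fin 3) (Fin 3) R :=
  diagonal ![x, x + y - 1, y] * !![x - 1, 0, 1; x + y - 1, 1, 1; y - 1, 1, 0]

/-- The column operations, independent of the plane, relating `reducedBlock` to `coreBlock`. -/
def columnFactor (R : Type*) [CommRing R] : Matrix (Fin 6) (Fin 6) R :=
  !![1, 0, 0, 0, 0, 0;
    1, 0, 2, 0, 0, 0;
    0, 1, 0, 2, 0, 0;
    0, 1, 0, 0, 0, 0;
    1, 0, 0, 0, 2, 0;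
    0, 1, 0, 0, 0, 2]

/-- The part of `reducedBlock` left after removing `rowFactor` and `columnFactor`: two upper
triangular blocks side by side. -/
def coreBlock (x y : R) : Matrix (Fin 3) (Fin 6) R :=
  !![x, 1, 0, y, 0, 1;
    0, 1 - y, 0, 0, x, 0;
    0, 0, y, 0, 0, 1 - x]

theorem evalMatrix_mul_reducedBlock (x y : R) :
    evalMatrix R * reducedBlock x y = rowFactor x y * (coreBlock x y * columnFactor R) := by
  ext i j
  fin_cases i <;> fin_cases j <;>
    simp [evalMatrix, rowFactor, reducedBlock, transverseBlock, coreBlock, columnFactor, mul_apply,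
      Fin.sum_univ_succ] <;> ring

theorem det_evalMatrix : (evalMatrix R).det = 2 := by
  simp [evalMatrix, det_fin_three]

theorem det_rowFactor (x y : R) : (rowFactor x y).det = x * y * (x + y - 1) := by
  simp [rowFactor, det_fin_three, Fin.prod_univ_three]
  ring

theorem det_columnFactor : (columnFactor R).det = 16 := by
  simp [columnFactor, det_succ_row_zero, Fin.sum_univ_succ, Fin.succAbove]
  norm_num

theorem rowStack_coreBlock (x y : Fin 2 → R) :
    (rowStack fun l => coreBlock (x l) (y l)) =
      !![x 0, 1, 0, y 0, 0, 1;
        0, 1 - y 0, 0, 0, x 0, 0;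
        0, 0, y 0, 0, 0, 1 - x 0;
        x 1, 1, 0, y 1, 0, 1;
        0, 1 - y 1, 0, 0, x 1, 0;
        0, 0, y 1, 0, 0, 1 - x 1] := by
  ext i j
  fin_cases i <;> rfl

theorem det_rowStack_coreBlock (x y : Fin 2 → R) :
    (rowStack fun l => coreBlock (x l) (y l)).det =
      det !![x 0, y 0; x 1, y 1] * det !![1 - y 0, x 0; 1 - y 1, x 1] *
        det !![y 0, 1 - x 0; y 1, 1 - x 1] := by
  rw [rowStack_coreBlock]
  simp [det_succ_column_zero, Fin.sum_univ_succ, Fin.succAbove]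
  ring

theorem det_rowStack_reducedBlock [IsDomain R] (h2 : (2 : R) ≠ 0) (x y : Fin 2 → R) :
    (rowStack fun l => reducedBlock (x l) (y l)).det =
      4 * (∏ l, x l * y l * (x l + y l - 1)) *
        (rowStack fun l => coreBlock (x l) (y l)).det := by
  have h4 : (2 * 2 : R) ≠ 0 := mul_ne_zero h2 h2
  have hcolumn : (rowStack fun l => coreBlock (x l) (y l) * columnFactor R).det =
      (rowStack fun l => coreBlock (x l) (y l)).det * 16 := by
    rw [← det_columnFactor]
    exact det_mul _ _
  -- `evalMatrix` costs a factor `2` per plane, which is then cancelled against `columnFactor`.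
  refine mul_left_cancel₀ h4 ?_
  calc 2 * 2 * (rowStack fun l => reducedBlock (x l) (y l)).det
      = (rowStack fun l => evalMatrix R * reducedBlock (x l) (y l)).det := by
        rw [det_rowStack_mul_left]
        simp [det_evalMatrix, sq]
    _ = (rowStack fun l =>
          rowFactor (x l) (y l) * (coreBlock (x l) (y l) * columnFactor R)).det := by
        simp only [evalMatrix_mul_reducedBlock]
    _ = (∏ l, x l * y l * (x l + y l - 1)) *
          ((rowStack fun l => coreBlock (x l) (y l)).det * 16) := by
        rw [det_rowStack_mul_left, hcolumn]
        simp only [det_rowFactor]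
    _ = _ := by ring

end WebBlocks

theorem prod_triples_fin_five {α : Type*} [CommMonoid α] (m : Fin 5 → Fin 5 → Fin 5 → α) :
    ∏ i, ∏ j ∈ Finset.Ioi i, ∏ k ∈ Finset.Ioi j, m i j k =
      m 0 1 2 * m 0 1 3 * m 0 1 4 * m 0 2 3 * m 0 2 4 * m 0 3 4 * m 1 2 3 * m 1 2 4 *
        m 1 3 4 * m 2 3 4 := by
  have Ioi_last : Finset.Ioi (1 : Fin 2) = ∅ := rfl
  simp [Fin.prod_univ_succ, Fin.prod_Ioi_succ, Ioi_last, mul_assoc]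

theorem prod_triples_ne_zero_iff {ι α : Type*} [Fintype ι] [Preorder ι] [LocallyFiniteOrderTop ι]
    [CommMonoidWithZero α] [NoZeroDivisors α] [Nontrivial α] (m : ι → ι → ι → α) :
    ∏ i, ∏ j ∈ Finset.Ioi i, ∏ k ∈ Finset.Ioi j, m i j k ≠ 0 ↔
      ∀ i j k, i < j → j < k → m i j k ≠ 0 := by
  simp only [Finset.prod_ne_zero_iff, Finset.mem_univ, Finset.mem_Ioi, true_imp_iff]
  exact ⟨fun h i j k hij hjk => h i j hij k hjk, fun h i j hij k hjk => h i j k hij hjk⟩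

section PlanarForms

variable {R : Type*} [CommRing R]

/-- The five 1-forms of a planar-normalized web, in the basis `dx¹, dx², dx³`: the three base planes
and the planes `x l dx¹ + y l dx² = dx³`. -/
def planarForm (x y : Fin 2 → R) : Fin 5 → Fin 3 → R :=
  ![![1, 0, -1], ![0, 1, -1], ![0, 0, 1], ![x 0, y 0, -1], ![x 1, y 1, -1]]

theorem prod_det_planarForm (x y : Fin 2 → R) :
    ∏ i, ∏ j ∈ Finset.Ioi i, ∏ k ∈ Finset.Ioi j,
        det (of ![planarForm x y i, planarForm x y j, planarForm x y k]) =
      (∏ l, x l * y l * (x l + y l - 1)) * (rowStack fun l => coreBlock (x l) (y l)).det := by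
  rw [prod_triples_fin_five, det_rowStack_coreBlock, Fin.prod_univ_two]
  simp [planarForm, det_fin_three, det_fin_two]
  ring

theorem det_fromBlocks_base_eq_prod_det_planarForm [IsDomain R] (h2 : (2 : R) ≠ 0)
    (x y : Fin 2 → R) :
    (fromBlocks (rowStack fun l => transverseBlock (x l) (y l) : Matrix (Fin 6) (Fin 6) R)
      (rowStack fun l => tangentBlock (x l) (y l)) (baseTransverse R) (baseTangent R)).det =
      4 * ∏ i, ∏ j ∈ Finset.Ioi i, ∏ k ∈ Finset.Ioi j,
        det (of ![planarForm x y i, planarForm x y j, planarForm x y k]) := by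
  rw [det_fromBlocks_base, det_rowStack_reducedBlock h2, prod_det_planarForm, mul_assoc]

end PlanarForms

theorem stmt_10_general {R : Type*} [CommRing R] [IsDomain R] (h2 : (2 : R) ≠ 0)
    (a b c d : R)
    (Ω : Fin 5 → Fin 3 → R)
    (hΩ : Ω = ![![1, 0, -1], ![0, 1, -1], ![0, 0, 1], ![a, b, -1], ![c, d, -1]])
    (m : Fin 5 → Fin 5 → Fin 5 → R)
    (hm : ∀ i j k, m i j k = Matrix.det (Matrix.of ![Ω i, Ω j, Ω k]))
    (M : Matrix (Fin 15) (Fin 15) R)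
    (hM : M = Matrix.of
      ![![1, 0, 2, 0, 0, 0, 1, 0, 0, 0, 0, 0, 1, 0, 0],
        ![0, 0, 0, 0, 1, 0, 0, 1, 0, 0, 0, 0, 0, 1, 0],
        ![0, 0, 0, 0, 0, 0, 0, 0, 1, 0, 0, 0, 0, 0, 1],
        ![0, 0, 0, 0, 0, 0, 0, 0, 0, 1, 0, 0, 1, 0, 0],
        ![0, 0, 0, 1, 0, 0, 0, 0, 0, 0, 1, 0, 0, 1, 0],
        ![0, 1, 0, 0, 0, 2, 0, 0, 0, 0, 0, 1, 0, 0, 1],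
        ![0, 0, 0, 0, 0, 0, 0, 0, 0, 0, 0, 0, 1, 0, 0],
        ![0, 0, 0, 0, 0, 0, 0, 0, 0, 0, 0, 0, 0, 1, 0],
        ![0, 0, 0, 0, 0, 0, 0, 0, 0, 0, 0, 0, 0, 0, 1],
        ![a ^ 3, a ^ 2 * b, 2 * a ^ 2, 2 * a * b, 0, 0, a, 0, 0, b, 0, 0, 1, 0, 0],
        ![a ^ 2 * b, a * b ^ 2, a * b, b ^ 2, a ^ 2, a * b, 0, a, 0, 0, b, 0, 0, 1, 0],
        ![a * b ^ 2, b ^ 3, 0, 0, 2 * a * b, 2 * b ^ 2, 0, 0, a, 0, 0, b, 0, 0, 1],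
        ![c ^ 3, c ^ 2 * d, 2 * c ^ 2, 2 * c * d, 0, 0, c, 0, 0, d, 0, 0, 1, 0, 0],
        ![c ^ 2 * d, c * d ^ 2, c * d, d ^ 2, c ^ 2, c * d, 0, c, 0, 0, d, 0, 0, 1, 0],
        ![c * d ^ 2, d ^ 3, 0, 0, 2 * c * d, 2 * d ^ 2, 0, 0, c, 0, 0, d, 0, 0, 1]]) :
    (M.det = 4 * ∏ i : Fin 5, ∏ j ∈ Finset.Ioi i, ∏ k ∈ Finset.Ioi j, m i j k) ∧
    (M.det ≠ 0 ↔ ∀ i j k : Fin 5, i < j → j < k → m i j k ≠ 0) := by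
  -- Nine even row rotations move the rows of the last two planes above those of the base planes.
  have hblocks : M.submatrix (⇑(finRotate 15 ^ 9) ∘ finSumFinEquiv (m := 6) (n := 9))
      (finSumFinEquiv (m := 6) (n := 9)) =
      fromBlocks (rowStack fun l => transverseBlock (![a, c] l) (![b, d] l))
        (rowStack fun l => tangentBlock (![a, c] l) (![b, d] l))
        (baseTransverse R) (baseTangent R) := by
    rw [hM, baseTransverse_eq]
    ext i j
    rcases i with i | i <;> rcases j with j | j <;> fin_cases i <;> fin_cases j <;> rfl
  have hrotate := det_submatrix_finRotate_pow_finSumFinEquiv (m := 6) (n := 9) 9 M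
  rw [Even.neg_one_pow (by decide), one_mul] at hrotate
  have hforms : Ω = planarForm ![a, c] ![b, d] := hΩ
  have hdet : M.det = 4 * ∏ i, ∏ j ∈ Finset.Ioi i, ∏ k ∈ Finset.Ioi j, m i j k := by
    simp only [hm, hforms]
    rw [← hrotate, hblocks, det_fromBlocks_base_eq_prod_det_planarForm h2]
  have h4 : (4 : R) ≠ 0 := by
    rw [show (4 : R) = 2 * 2 by norm_num]
    exact mul_ne_zero h2 h2
  exact ⟨hdet, by rw [hdet, mul_ne_zero_iff_left h4, prod_triples_ne_zero_iff]⟩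

/-- The determinant of the 15×15 matrix `M_W` of the linear system characterizing
projective connections compatible with a planar-normalized 5-web in `ℂ³` equals
`4·∏_{i<j<k} m_{ijk}`, where `m_{ijk}` is the coefficient of `dx¹∧dx²∧dx³` in
`Ωⁱ∧Ωʲ∧Ωᵏ`. In particular `det M_W ≠ 0` iff every triple of the five 1-forms is
linearly independent. -/
theorem stmt_10 (a b c d : ℂ)
    (Ω : Fin 5 → Fin 3 → ℂ)
    (hΩ : Ω = ![![1, 0, -1], ![0, 1, -1], ![0, 0, 1], ![a, b, -1], ![c, d, -1]])
    (m : Fin 5 → Fin 5 → Fin 5 → ℂ)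
    (hm : ∀ i j k, m i j k = Matrix.det (Matrix.of ![Ω i, Ω j, Ω k]))
    (M : Matrix (Fin 15) (Fin 15) ℂ)
    (hM : M = Matrix.of
      ![![1, 0, 2, 0, 0, 0, 1, 0, 0, 0, 0, 0, 1, 0, 0],
        ![0, 0, 0, 0, 1, 0, 0, 1, 0, 0, 0, 0, 0, 1, 0],
        ![0, 0, 0, 0, 0, 0, 0, 0, 1, 0, 0, 0, 0, 0, 1],
        ![0, 0, 0, 0, 0, 0, 0, 0, 0, 1, 0, 0, 1, 0, 0],
        ![0, 0, 0, 1, 0, 0, 0, 0, 0, 0, 1, 0, 0, 1, 0],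
        ![0, 1, 0, 0, 0, 2, 0, 0, 0, 0, 0, 1, 0, 0, 1],
        ![0, 0, 0, 0, 0, 0, 0, 0, 0, 0, 0, 0, 1, 0, 0],
        ![0, 0, 0, 0, 0, 0, 0, 0, 0, 0, 0, 0, 0, 1, 0],
        ![0, 0, 0, 0, 0, 0, 0, 0, 0, 0, 0, 0, 0, 0, 1],
        ![a ^ 3, a ^ 2 * b, 2 * a ^ 2, 2 * a * b, 0, 0, a, 0, 0, b, 0, 0, 1, 0, 0],
        ![a ^ 2 * b, a * b ^ 2, a * b, b ^ 2, a ^ 2, a * b, 0, a, 0, 0, b, 0, 0, 1, 0],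
        ![a * b ^ 2, b ^ 3, 0, 0, 2 * a * b, 2 * b ^ 2, 0, 0, a, 0, 0, b, 0, 0, 1],
        ![c ^ 3, c ^ 2 * d, 2 * c ^ 2, 2 * c * d, 0, 0, c, 0, 0, d, 0, 0, 1, 0, 0],
        ![c ^ 2 * d, c * d ^ 2, c * d, d ^ 2, c ^ 2, c * d, 0, c, 0, 0, d, 0, 0, 1, 0],
        ![c * d ^ 2, d ^ 3, 0, 0, 2 * c * d, 2 * d ^ 2, 0, 0, c, 0, 0, d, 0, 0, 1]]) :
    (M.det = 4 * ∏ i : Fin 5, ∏ j ∈ Finset.Ioi i, ∏ k ∈ Finset.Ioi j, m i j k) ∧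
    (M.det ≠ 0 ↔ ∀ i j k : Fin 5, i < j → j < k → m i j k ≠ 0) := by
  exact stmt_10_general two_ne_zero a b c d Ω hΩ m hm M hM
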